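/- Let F be a Ferrers diagram of semiperimeter n+1, T ∈ EWtab(F), S = S(T) its supplementary tableau, and CanonTop(φ_TC(T)) = (U^0, V^1, U^1, …). If j ∈ cols(F) lies in V^ℓ and k ∈ rows(F) satisfies k < j, then k ∈ U^{ℓ−1} if and only if S_{kj} = 1 and this 1 (which, since k < j, is the entry T_{kj} of a cell of T) is not a cornersupport entry. -/

import Mathlib

open Classical

/-- A Ferrers diagram of semiperimeter `n + 1`, encoded by the set of its row labels
(labels `0, …, n` run along the south-east border; `0` labels the top row and the
last label `n` is a column label). -/
structure Ferrers (n : ℕ) where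
  rows : Finset (Fin (n + 1))
  zero_mem : 0 ∈ rows
  last_not_mem : Fin.last n ∉ rows

namespace Ferrers

/-- `(i, j)` is a cell of the diagram: `i` is a row label, `j` a column label, `i < j`. -/
def Cell {n : ℕ} (F : Ferrers n) (i j : Fin (n + 1)) : Prop :=
  i ∈ F.rows ∧ j ∉ F.rows ∧ i < j

/-- Adjacency in the Ferrers graph `G(F)`. -/
def Adj {n : ℕ} (F : Ferrers n) (u v : Fin (n + 1)) : Prop :=
  F.Cell u v ∨ F.Cell v u

/-- Degree of a vertex in `G(F)`. -/
noncomputable def deg {n : ℕ} (F : Ferrers n) (v : Fin (n + 1)) : ℕ :=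
  {u | F.Adj v u}.ncard

/-- Toppling a single vertex.  The height at the sink `0` is kept equal to `c 0`
(grains sent to the sink vanish); toppling the sink sends one grain to each of
its neighbours. -/
noncomputable def topple {n : ℕ} (F : Ferrers n) (c : Fin (n + 1) → ℕ)
    (v : Fin (n + 1)) : Fin (n + 1) → ℕ :=
  fun u =>
    if u = 0 then c 0
    else if u = v then c v - F.deg v
    else if F.Adj v u then c u + 1
    else c u

/-- Toppling the vertices of a list in order. -/
noncomputable def toppleList {n : ℕ} (F : Ferrers n) (c : Fin (n + 1) → ℕ)
    (l : List (Fin (n + 1))) : Fin (n + 1) → ℕ :=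
  l.foldl F.topple c

/-- Simultaneous toppling of a set of vertices. -/
noncomputable def toppleSet {n : ℕ} (F : Ferrers n) (c : Fin (n + 1) → ℕ)
    (S : Set (Fin (n + 1))) : Fin (n + 1) → ℕ :=
  fun u =>
    if u = 0 then c 0
    else c u + {w ∈ S | F.Adj w u}.ncard - if u ∈ S then F.deg u else 0

/-- A configuration is stable if every non-sink vertex has fewer grains than its degree. -/
def Stable {n : ℕ} (F : Ferrers n) (c : Fin (n + 1) → ℕ) : Prop :=
  ∀ v, v ≠ 0 → c v < F.deg v

/-- A Dhar (burning) ordering for `c`: an ordering `v₀ = 0, v₁, …, vₙ` of all the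
vertices such that each `vᵢ` (`i ≥ 1`) is unstable after toppling `v₀, …, v_{i-1}`. -/
def DharSeq {n : ℕ} (F : Ferrers n) (c : Fin (n + 1) → ℕ) (l : List (Fin (n + 1))) : Prop :=
  l.length = n + 1 ∧ l.Nodup ∧ l.head? = some 0 ∧
    ∀ i, ∀ h : i < l.length, 1 ≤ i →
      F.deg (l.get ⟨i, h⟩) ≤ F.toppleList c (l.take i) (l.get ⟨i, h⟩)

/-- Recurrent configurations (via Dhar's criterion).  The height at the sink is
normalised to `0`. -/
def Recurrent {n : ℕ} (F : Ferrers n) (c : Fin (n + 1) → ℕ) : Prop :=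
  c 0 = 0 ∧ F.Stable c ∧ ∃ l, F.DharSeq c l

/-- Minimal recurrent configurations: recurrent with minimal total number of grains. -/
def RecMin {n : ℕ} (F : Ferrers n) (c : Fin (n + 1) → ℕ) : Prop :=
  F.Recurrent c ∧ ∀ c', F.Recurrent c' → (∑ v, c v) ≤ ∑ v, c' v

/-- Canonical toppling: block `0` is `{0}` (the sink); from then on, blocks with odd
index are the sets of currently unstable column vertices and blocks with even index
the sets of currently unstable row vertices.  The first component is the configuration
just before toppling the block recorded in the second component. -/
noncomputable def canonAux {n : ℕ} (F : Ferrers n) (c : Fin (n + 1) → ℕ) :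
    ℕ → ((Fin (n + 1) → ℕ) × Set (Fin (n + 1)))
  | 0 => (c, {0})
  | k + 1 =>
    let c' := F.toppleSet (canonAux F c k).1 (canonAux F c k).2
    (c', {v | v ≠ 0 ∧ (if k % 2 = 0 then v ∉ F.rows else v ∈ F.rows) ∧ F.deg v ≤ c' v})

/-- The `k`-th block of the canonical toppling of `c`:
`canonTop F c 0 = U⁰ = {0}`, `canonTop F c (2i-1) = Vⁱ`, `canonTop F c (2i) = Uⁱ`. -/
noncomputable def canonTop {n : ℕ} (F : Ferrers n) (c : Fin (n + 1) → ℕ) (k : ℕ) :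
    Set (Fin (n + 1)) :=
  (F.canonAux c k).2

/-- The configuration just before toppling the `k`-th block of the canonical toppling. -/
noncomputable def canonConfig {n : ℕ} (F : Ferrers n) (c : Fin (n + 1) → ℕ) (k : ℕ) :
    Fin (n + 1) → ℕ :=
  (F.canonAux c k).1

/-- The index of the block of the canonical toppling of `c` containing `v`. -/
noncomputable def bIdx {n : ℕ} (F : Ferrers n) (c : Fin (n + 1) → ℕ) (v : Fin (n + 1)) : ℕ :=
  sInf {k | v ∈ F.canonTop c k}

/-- `T` is a EW-tableau on `F` (entries of non-cells are normalised to `false`):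
the top row contains only `1`s, every other row contains a `0`, and there is no
rectangle with two diagonally opposite `0`s and two `1`s in the other corners. -/
def IsEW {n : ℕ} (F : Ferrers n) (T : Fin (n + 1) → Fin (n + 1) → Bool) : Prop :=
  (∀ i j, ¬F.Cell i j → T i j = false) ∧
  (∀ j, F.Cell 0 j → T 0 j = true) ∧
  (∀ i, i ∈ F.rows → i ≠ 0 → ∃ j, F.Cell i j ∧ T i j = false) ∧
  (∀ i i' j j', F.Cell i j → F.Cell i j' → F.Cell i' j → F.Cell i' j' →
    T i j = T i' j' → T i j' = T i' j → T i j = T i j')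

/-- The configuration associated to a tableau: row vertices count the `1`s in their
row, column vertices count the `0`s in their column (the sink is normalised to `0`). -/
noncomputable def phiTC {n : ℕ} (F : Ferrers n) (T : Fin (n + 1) → Fin (n + 1) → Bool) :
    Fin (n + 1) → ℕ :=
  fun v =>
    if v = 0 then 0
    else if v ∈ F.rows then {j | F.Cell v j ∧ T v j = true}.ncard
    else {i | F.Cell i v ∧ T i v = false}.ncard

/-- The tableau associated to a (minimal recurrent) configuration: a cell `(i, j)`
gets a `1` exactly when `i` lies in an earlier block than `j` in the canonical
toppling of `c`. -/
noncomputable def phiCT {n : ℕ} (F : Ferrers n) (c : Fin (n + 1) → ℕ) :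
    Fin (n + 1) → Fin (n + 1) → Bool :=
  fun i j => if F.Cell i j ∧ F.bIdx c i < F.bIdx c j then true else false

/-- The supplementary tableau of `T`: `S i j = 1` exactly when the row vertex `i`
lies in an earlier block than the column vertex `j` in `CanonTop (φ_TC T)`. -/
noncomputable def suppS {n : ℕ} (F : Ferrers n) (T : Fin (n + 1) → Fin (n + 1) → Bool)
    (i j : Fin (n + 1)) : Bool :=
  if F.bIdx (F.phiTC T) i < F.bIdx (F.phiTC T) j then true else false

/-- The entry of `T` in cell `(j, k)` is a cornersupport entry. -/
def Cornersupport {n : ℕ} (F : Ferrers n) (T : Fin (n + 1) → Fin (n + 1) → Bool)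
    (j k : Fin (n + 1)) : Prop :=
  ∃ j' k', j' ∈ F.rows ∧ k' ∉ F.rows ∧ j' ≠ j ∧ k' ≠ k ∧
    F.suppS T j' k' = !(T j k) ∧ F.suppS T j' k = T j k ∧ F.suppS T j k' = T j k

/-- `ν_v(T)`: the number of non-cornersupport `0`s in row `v` (if `v` is a row label),
resp. non-cornersupport `1`s in column `v` (if `v` is a column label). -/
noncomputable def nu {n : ℕ} (F : Ferrers n) (T : Fin (n + 1) → Fin (n + 1) → Bool)
    (v : Fin (n + 1)) : ℕ :=
  if v ∈ F.rows then {k | F.Cell v k ∧ T v k = false ∧ ¬F.Cornersupport T v k}.ncard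
  else {i | F.Cell i v ∧ T i v = true ∧ ¬F.Cornersupport T i v}.ncard

/-- `μ_v(c)`: if `v ∈ Uⁱ`, the number of `k ∈ Vⁱ` with `k > v`; if `v ∈ Vⁱ`,
the number of `k ∈ U^{i-1}` with `k < v`.  In both cases the relevant block is the
one immediately preceding the block of `v`. -/
noncomputable def mu {n : ℕ} (F : Ferrers n) (c : Fin (n + 1) → ℕ) (v : Fin (n + 1)) : ℕ :=
  if v ∈ F.rows then {k | v < k ∧ k ∈ F.canonTop c (F.bIdx c v - 1)}.ncard
  else {k | k < v ∧ k ∈ F.canonTop c (F.bIdx c v - 1)}.ncard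

/-- The minimal recurrent configuration with the same canonical toppling as `c`:
if `j ∈ Uⁱ` then `minrec c j = |{ℓ ∈ Vᵏ : j < ℓ, k > i}|`, and if `j ∈ Vⁱ` then
`minrec c j = |{ℓ ∈ Uᵏ : ℓ < j, k ≥ i}|` (blocks `Vᵏ` sit at odd index `2k - 1`,
blocks `Uᵏ` at even index `2k`). -/
noncomputable def minrecFun {n : ℕ} (F : Ferrers n) (c : Fin (n + 1) → ℕ) :
    Fin (n + 1) → ℕ :=
  fun j =>
    if j = 0 then 0
    else if j ∈ F.rows then
      {l | j < l ∧ ∃ k, F.bIdx c j < 2 * k + 1 ∧ l ∈ F.canonTop c (2 * k + 1)}.ncard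
    else
      {l | l < j ∧ ∃ k, F.bIdx c j < 2 * k ∧ l ∈ F.canonTop c (2 * k)}.ncard

/-- The number of edges of `G(F)` (equivalently, the number of cells of `F`). -/
noncomputable def edgeCount {n : ℕ} (F : Ferrers n) : ℕ :=
  {p : Fin (n + 1) × Fin (n + 1) | F.Cell p.1 p.2}.ncard

end Ferrers

/- An EW-tableau orients the Ferrers graph: a cell with entry `1` is an arc from its row to its
column, a cell with entry `0` an arc from its column to its row.  This orientation is acyclic with
unique source `0`, and `φ_TC` records its out-degrees.  A vertex is unstable exactly when it is a
source, and toppling a source reverses its arcs, so canonical toppling peels off, alternately among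
columns and rows, all vertices whose in-neighbours are already gone.  Hence arcs lead to later
blocks, and from block `2` on every vertex has an in-neighbour in the block just before its own.
If the row `k` lies earlier than the block just before that of the column `j`, following such
in-neighbours back from `j` to a row `r` and on to a column `s` gives a corner `(r, s)` that makes
the entry in cell `(k, j)` a cornersupport. -/

namespace Ferrers

section Reversal

variable {α : Type*} {R : α → α → Prop} {D S : Set α} {u v : α}

/-- `v` has no in-neighbour under the relation `R`, read as a set of arcs. -/
def IsSource (R : α → α → Prop) (v : α) : Prop :=
  ∀ u, ¬R u v

/-- `v` is a source of what remains of `R` once the vertices in `D` are deleted.  These are the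
vertices that are unstable after toppling `D`. -/
def IsSourceOutside (R : α → α → Prop) (D : Set α) (v : α) : Prop :=
  v ∉ D ∧ ∀ u, R u v → u ∈ D

/-- The relation obtained from `R` by reversing the arcs between `D` and its complement: the
effect on an orientation of toppling `D`. -/
def reverseCut (R : α → α → Prop) (D : Set α) (u v : α) : Prop :=
  if u ∈ D ↔ v ∈ D then R u v else R v u

theorem reverseCut_empty : reverseCut R ∅ = R := by
  ext u v
  simp [reverseCut]

theorem reverseCut_reverseCut (hDS : Disjoint D S) :
    reverseCut (reverseCut R D) S = reverseCut R (D ∪ S) := by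
  ext u v
  have hu : u ∈ D → u ∉ S := fun h => Set.disjoint_left.mp hDS h
  have hv : v ∈ D → v ∉ S := fun h => Set.disjoint_left.mp hDS h
  simp only [reverseCut, Set.mem_union]
  grind

theorem IsSourceOutside.isSource_reverseCut (hv : IsSourceOutside R D v)
    (hD : ∀ u v, R u v → v ∈ D → u ∈ D) : IsSource (reverseCut R D) v := by
  intro u huv
  by_cases huD : u ∈ D
  · exact hv.1 (hD v u (by simpa [reverseCut, huD, hv.1] using huv) huD)
  · exact huD (hv.2 u (by simpa [reverseCut, huD, hv.1] using huv))

theorem IsSource.isSourceOutside (hsrc : IsSource (reverseCut R D) v)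
    (hD : ∀ u v, R u v → v ∈ D → u ∈ D) (hv : ¬IsSource R v) : IsSourceOutside R D v := by
  have hvD : v ∉ D := fun hvD => hv fun u huv => hsrc u <| by
    simpa [reverseCut, hvD, hD u v huv hvD] using huv
  refine ⟨hvD, fun u huv => by_contra fun huD => hsrc u ?_⟩
  simpa [reverseCut, huD, hvD] using huv

end Reversal

variable {n : ℕ} {F : Ferrers n} {c : Fin (n + 1) → ℕ} {k m : ℕ} {u v : Fin (n + 1)}

theorem Adj.symm (h : F.Adj u v) : F.Adj v u :=
  Or.symm h

theorem Adj.mem_rows_iff (h : F.Adj u v) : u ∈ F.rows ↔ v ∉ F.rows := by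
  rcases h with ⟨hu, hv, -⟩ | ⟨hv, hu, -⟩ <;> simp [hu, hv]

section Toppling

/-- The vertices toppled before block `k` of the canonical toppling of `c`. -/
def toppledBefore (F : Ferrers n) (c : Fin (n + 1) → ℕ) (k : ℕ) : Set (Fin (n + 1)) :=
  ⋃ i < k, F.canonTop c i

theorem mem_toppledBefore : v ∈ F.toppledBefore c k ↔ ∃ i < k, v ∈ F.canonTop c i := by
  simp [toppledBefore]

theorem toppledBefore_zero : F.toppledBefore c 0 = ∅ := by
  simp [toppledBefore]

theorem toppledBefore_succ :
    F.toppledBefore c (k + 1) = F.toppledBefore c k ∪ F.canonTop c k :=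
  Set.biUnion_lt_succ _ _

theorem canonConfig_succ :
    F.canonConfig c (k + 1) = F.toppleSet (F.canonConfig c k) (F.canonTop c k) :=
  rfl

theorem mem_canonTop_zero : v ∈ F.canonTop c 0 ↔ v = 0 :=
  Iff.rfl

theorem mem_canonTop_succ : v ∈ F.canonTop c (k + 1) ↔
    v ≠ 0 ∧ (v ∈ F.rows ↔ Even (k + 1)) ∧ F.deg v ≤ F.canonConfig c (k + 1) v := by
  have hparity : (if k % 2 = 0 then v ∉ F.rows else v ∈ F.rows) ↔ (v ∈ F.rows ↔ Even (k + 1)) := by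
    rw [Nat.even_add_one, Nat.even_iff]
    split_ifs with hk <;> simp [hk]
  exact and_congr_right fun _ => and_congr_left fun _ => hparity

theorem canonTop_subset_toppledBefore (h : k < m) : F.canonTop c k ⊆ F.toppledBefore c m :=
  fun _ hv => mem_toppledBefore.mpr ⟨k, h, hv⟩

end Toppling

section Orientation

/-- `R` gives every edge of the Ferrers graph exactly one direction. -/
structure IsOrientation (F : Ferrers n) (R : Fin (n + 1) → Fin (n + 1) → Prop) : Prop where
  adj_iff : ∀ u v, F.Adj u v ↔ R u v ∨ R v u
  asymm : ∀ u v, R u v → ¬R v u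

/-- The configuration of out-degrees of `R`, normalised to `0` at the sink. -/
noncomputable def outConfig (R : Fin (n + 1) → Fin (n + 1) → Prop) : Fin (n + 1) → ℕ :=
  fun v => if v = 0 then 0 else {w | R v w}.ncard

variable {R : Fin (n + 1) → Fin (n + 1) → Prop} {D S : Set (Fin (n + 1))}

namespace IsOrientation

theorem adj (hR : F.IsOrientation R) (h : R u v) : F.Adj u v :=
  (hR.adj_iff u v).mpr (Or.inl h)

protected theorem reverseCut (hR : F.IsOrientation R) (D : Set (Fin (n + 1))) :
    F.IsOrientation (reverseCut R D) where
  adj_iff u v := by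
    by_cases hcut : u ∈ D ↔ v ∈ D
    · simpa [reverseCut, hcut] using hR.adj_iff u v
    · simpa [reverseCut, hcut, mt Iff.symm hcut, or_comm] using hR.adj_iff u v
  asymm u v := by
    by_cases hcut : u ∈ D ↔ v ∈ D
    · simpa [reverseCut, hcut] using hR.asymm u v
    · simpa [reverseCut, hcut, mt Iff.symm hcut] using hR.asymm v u

theorem deg_le_outConfig_iff (hR : F.IsOrientation R) (hv : v ≠ 0) :
    F.deg v ≤ outConfig R v ↔ IsSource R v := by
  rw [outConfig, if_neg hv, deg]
  have hsub : {w | R v w} ⊆ {w | F.Adj v w} := fun w hw => hR.adj hw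
  constructor
  · intro hle u huv
    have heq := Set.eq_of_subset_of_ncard_le hsub hle (Set.toFinite _)
    exact hR.asymm u v huv (heq.symm.subset (hR.adj huv).symm)
  · exact fun hsrc => Set.ncard_le_ncard
      (fun w hw => ((hR.adj_iff v w).mp hw).resolve_right (hsrc w)) (Set.toFinite _)

theorem toppleSet_outConfig (hR : F.IsOrientation R) (hS : ∀ v ∈ S, IsSource R v) :
    F.toppleSet (outConfig R) S = outConfig (reverseCut R S) := by
  funext v
  by_cases hv : v = 0
  · simp [toppleSet, outConfig, hv]
  simp only [toppleSet, outConfig, if_neg hv]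
  by_cases hvS : v ∈ S
  · have hindep : {w ∈ S | F.Adj w v} = ∅ := Set.eq_empty_of_forall_notMem fun w hw =>
      ((hR.adj_iff w v).mp hw.2).elim (hS v hvS w) (hS w hw.1 v)
    have hout : {w | R v w} = {w | F.Adj v w} := Set.ext fun w => by
      simp [hR.adj_iff v w, hS v hvS w]
    have hout' : {w | reverseCut R S v w} = ∅ := by
      refine Set.eq_empty_of_forall_notMem fun w hw => ?_
      by_cases hwS : w ∈ S
      · exact hS w hwS v (by simpa [reverseCut, hvS, hwS] using hw)
      · exact hS v hvS w (by simpa [reverseCut, hvS, hwS] using hw)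
    simp [hindep, hout, hout', hvS, deg]
  · have hout' : {w | reverseCut R S v w} = {w | R v w} ∪ {w ∈ S | F.Adj w v} := by
      ext w
      have hw := hS w
      simp only [reverseCut, Set.mem_union, Set.mem_ofPred_eq, hR.adj_iff w v]
      grind [IsSource]
    have hdisj : Disjoint {w | R v w} {w ∈ S | F.Adj w v} :=
      Set.disjoint_left.mpr fun w hw hw' => hS w hw'.1 v hw
    rw [if_neg hvS, Nat.sub_zero, hout', Set.ncard_union_eq hdisj]

end IsOrientation

/-- An orientation of the Ferrers graph whose only source is the sink `0` of the sandpile. -/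
structure IsRooted (F : Ferrers n) (R : Fin (n + 1) → Fin (n + 1) → Prop) : Prop
    extends F.IsOrientation R where
  isSource_iff : ∀ v, IsSource R v ↔ v = 0

namespace IsRooted

theorem mem_canonTop_iff_of_canonConfig_eq (hR : F.IsRooted R)
    (hconf : F.canonConfig c k = outConfig (reverseCut R (F.toppledBefore c k)))
    (hclosed : ∀ u v, R u v → v ∈ F.toppledBefore c k → u ∈ F.toppledBefore c k) :
    v ∈ F.canonTop c k ↔
      (v ∈ F.rows ↔ Even k) ∧ IsSourceOutside R (F.toppledBefore c k) v := by
  cases k with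
  | zero =>
    have hrows : v = 0 → v ∈ F.rows := fun h => h ▸ F.zero_mem
    simpa [mem_canonTop_zero, toppledBefore_zero, IsSourceOutside, ← hR.isSource_iff v, IsSource]
      using hrows ∘ (hR.isSource_iff v).mp
  | succ k =>
    have hzero : 0 ∈ F.toppledBefore c (k + 1) :=
      canonTop_subset_toppledBefore k.succ_pos (mem_canonTop_zero.mpr rfl)
    rw [mem_canonTop_succ, hconf]
    constructor
    · rintro ⟨hv, hparity, hdeg⟩
      have hsrc := ((hR.toIsOrientation.reverseCut _).deg_le_outConfig_iff hv).mp hdeg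
      exact ⟨hparity, hsrc.isSourceOutside hclosed (mt (hR.isSource_iff v).mp hv)⟩
    · rintro ⟨hparity, hsrc⟩
      have hv : v ≠ 0 := fun h => hsrc.1 (h ▸ hzero)
      exact ⟨hv, hparity, ((hR.toIsOrientation.reverseCut _).deg_le_outConfig_iff hv).mpr
        (hsrc.isSource_reverseCut hclosed)⟩

theorem canonConfig_eq_and_toppledBefore_closed (hR : F.IsRooted R) (k : ℕ) :
    F.canonConfig (outConfig R) k =
        outConfig (reverseCut R (F.toppledBefore (outConfig R) k)) ∧
      ∀ u v, R u v → v ∈ F.toppledBefore (outConfig R) k →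
        u ∈ F.toppledBefore (outConfig R) k := by
  induction k with
  | zero =>
    rw [toppledBefore_zero, reverseCut_empty]
    exact ⟨rfl, fun _ _ _ hv => hv⟩
  | succ k ih =>
    obtain ⟨hconf, hclosed⟩ := ih
    have hblock : ∀ v ∈ F.canonTop (outConfig R) k,
        IsSourceOutside R (F.toppledBefore (outConfig R) k) v :=
      fun v hv => ((hR.mem_canonTop_iff_of_canonConfig_eq hconf hclosed).mp hv).2
    rw [toppledBefore_succ]
    constructor
    · rw [canonConfig_succ, hconf, (hR.toIsOrientation.reverseCut _).toppleSet_outConfig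
        fun v hv => (hblock v hv).isSource_reverseCut hclosed]
      rw [reverseCut_reverseCut (Set.disjoint_right.mpr fun v hv => (hblock v hv).1)]
    · rintro u v huv (hv | hv)
      · exact Or.inl (hclosed u v huv hv)
      · exact Or.inl ((hblock v hv).2 u huv)

theorem mem_canonTop_iff_isSourceOutside (hR : F.IsRooted R) :
    v ∈ F.canonTop (outConfig R) k ↔
      (v ∈ F.rows ↔ Even k) ∧ IsSourceOutside R (F.toppledBefore (outConfig R) k) v :=
  hR.mem_canonTop_iff_of_canonConfig_eq (hR.canonConfig_eq_and_toppledBefore_closed k).1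
    (hR.canonConfig_eq_and_toppledBefore_closed k).2

theorem exists_mem_canonTop (hR : F.IsRooted R) (hwf : WellFounded R) (v : Fin (n + 1)) :
    ∃ k, v ∈ F.canonTop (outConfig R) k := by
  induction v using hwf.induction with
  | _ v ih =>
  choose! block hblock using ih
  obtain ⟨N, hN⟩ := (Set.finite_range block).bddAbove
  obtain ⟨k, hNk, hparity⟩ : ∃ k > N, v ∈ F.rows ↔ Even k := by
    by_cases hv : v ∈ F.rows
    · exact ⟨2 * N + 2, by omega, by simp [hv, Nat.even_add]⟩
    · exact ⟨2 * N + 1, by omega, by simp [hv]⟩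
  by_cases hvk : v ∈ F.toppledBefore (outConfig R) k
  · obtain ⟨i, -, hi⟩ := mem_toppledBefore.mp hvk
    exact ⟨i, hi⟩
  · refine ⟨k, hR.mem_canonTop_iff_isSourceOutside.mpr ⟨hparity, hvk, fun u huv => ?_⟩⟩
    exact canonTop_subset_toppledBefore ((hN ⟨u, rfl⟩).trans_lt hNk) (hblock u huv)

theorem mem_canonTop_iff (hR : F.IsRooted R) (hwf : WellFounded R) :
    v ∈ F.canonTop (outConfig R) k ↔ F.bIdx (outConfig R) v = k := by
  have hmem : v ∈ F.canonTop (outConfig R) (F.bIdx (outConfig R) v) :=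
    Nat.sInf_mem (s := {k | v ∈ F.canonTop (outConfig R) k}) (hR.exists_mem_canonTop hwf v)
  refine ⟨fun hv => le_antisymm (Nat.sInf_le hv) (not_lt.mp fun hlt => ?_), fun h => h ▸ hmem⟩
  exact (hR.mem_canonTop_iff_isSourceOutside.mp hv).2.1 (canonTop_subset_toppledBefore hlt hmem)

theorem mem_toppledBefore_iff (hR : F.IsRooted R) (hwf : WellFounded R) :
    v ∈ F.toppledBefore (outConfig R) k ↔ F.bIdx (outConfig R) v < k := by
  simp [mem_toppledBefore, hR.mem_canonTop_iff hwf]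

theorem bIdx_eq_iff (hR : F.IsRooted R) (hwf : WellFounded R) :
    F.bIdx (outConfig R) v = k ↔ (v ∈ F.rows ↔ Even k) ∧ k ≤ F.bIdx (outConfig R) v ∧
      ∀ u, R u v → F.bIdx (outConfig R) u < k := by
  rw [← hR.mem_canonTop_iff hwf, hR.mem_canonTop_iff_isSourceOutside]
  simp only [IsSourceOutside, hR.mem_toppledBefore_iff hwf, not_lt]

theorem mem_rows_iff_even_bIdx (hR : F.IsRooted R) (hwf : WellFounded R) :
    v ∈ F.rows ↔ Even (F.bIdx (outConfig R) v) :=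
  ((hR.bIdx_eq_iff hwf).mp rfl).1

theorem bIdx_lt_bIdx (hR : F.IsRooted R) (hwf : WellFounded R) (h : R u v) :
    F.bIdx (outConfig R) u < F.bIdx (outConfig R) v :=
  ((hR.bIdx_eq_iff hwf).mp rfl).2.2 u h

theorem exists_bIdx_add_one_eq (hR : F.IsRooted R) (hwf : WellFounded R)
    (hv : 2 ≤ F.bIdx (outConfig R) v) :
    ∃ u, R u v ∧ F.bIdx (outConfig R) u + 1 = F.bIdx (outConfig R) v := by
  obtain ⟨m, hm⟩ := Nat.exists_eq_add_of_le' hv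
  have hparity : v ∈ F.rows ↔ Even m := by
    rw [hR.mem_rows_iff_even_bIdx hwf, hm]
    simp [Nat.even_add]
  -- Otherwise `v` would already have been toppled two blocks earlier.
  obtain ⟨u, huv, hmu⟩ : ∃ u, R u v ∧ m ≤ F.bIdx (outConfig R) u := by
    by_contra! hearly
    have := (hR.bIdx_eq_iff hwf).mpr ⟨hparity, by omega, hearly⟩
    omega
  refine ⟨u, huv, ?_⟩
  have hlt := hR.bIdx_lt_bIdx hwf huv
  have hopp := (hR.adj huv).mem_rows_iff
  rw [hR.mem_rows_iff_even_bIdx hwf, hparity, Nat.even_iff, Nat.even_iff] at hopp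
  omega

theorem bIdx_add_one_eq_iff (hR : F.IsRooted R) (hwf : WellFounded R) {i j : Fin (n + 1)}
    (hi : i ∈ F.rows) (hj : j ∉ F.rows) :
    F.bIdx (outConfig R) i + 1 = F.bIdx (outConfig R) j ↔
      F.bIdx (outConfig R) i < F.bIdx (outConfig R) j ∧
        ¬∃ r s, r ∈ F.rows ∧ s ∉ F.rows ∧ F.bIdx (outConfig R) s ≤ F.bIdx (outConfig R) r ∧
          F.bIdx (outConfig R) r < F.bIdx (outConfig R) j ∧
          F.bIdx (outConfig R) i < F.bIdx (outConfig R) s := by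
  constructor
  · refine fun h => ⟨by omega, ?_⟩
    rintro ⟨r, s, -, -, hsr, hrj, his⟩
    omega
  · rintro ⟨hij, hcorner⟩
    by_contra hne
    rw [hR.mem_rows_iff_even_bIdx hwf, Nat.even_iff] at hi hj
    obtain ⟨r, -, hr⟩ := hR.exists_bIdx_add_one_eq hwf (v := j) (by omega)
    obtain ⟨s, -, hs⟩ := hR.exists_bIdx_add_one_eq hwf (v := r) (by omega)
    refine hcorner ⟨r, s, ?_, ?_, by omega, by omega, by omega⟩ <;>
      rw [hR.mem_rows_iff_even_bIdx hwf, Nat.even_iff] <;> omega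

end IsRooted

end Orientation

section Tableau

variable {T : Fin (n + 1) → Fin (n + 1) → Bool} {i j : Fin (n + 1)}

/-- The arcs of the orientation encoded by a tableau: from row to column for the entry `1`, from
column to row for the entry `0`. -/
def Arc (F : Ferrers n) (T : Fin (n + 1) → Fin (n + 1) → Bool) (u v : Fin (n + 1)) : Prop :=
  (F.Cell u v ∧ T u v = true) ∨ (F.Cell v u ∧ T v u = false)

theorem arc_iff_of_tail_mem_rows (hu : u ∈ F.rows) :
    F.Arc T u v ↔ F.Cell u v ∧ T u v = true :=
  or_iff_left fun h => h.1.2.1 hu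

theorem arc_iff_of_head_mem_rows (hv : v ∈ F.rows) :
    F.Arc T u v ↔ F.Cell v u ∧ T v u = false :=
  or_iff_right fun h => h.1.2.1 hv

theorem isOrientation_arc : F.IsOrientation (F.Arc T) where
  adj_iff u v := by
    unfold Adj Arc
    grind
  asymm u v := by
    unfold Arc Cell
    grind

theorem phiTC_eq_outConfig_arc : F.phiTC T = outConfig (F.Arc T) := by
  funext v
  unfold phiTC outConfig
  congr 1
  split_ifs with hv
  · simp only [arc_iff_of_tail_mem_rows hv]
  · simp only [Arc, Cell, hv, false_and, false_or]

namespace IsEW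

theorem isRooted_arc (hT : F.IsEW T) : F.IsRooted (F.Arc T) where
  toIsOrientation := isOrientation_arc
  isSource_iff v := by
    obtain ⟨-, htop, hzero, -⟩ := hT
    constructor
    · intro hsrc
      by_contra hv
      by_cases hrow : v ∈ F.rows
      · obtain ⟨j, hj⟩ := hzero v hrow hv
        exact hsrc j (Or.inr hj)
      · have hcell : F.Cell 0 v := ⟨F.zero_mem, hrow, Fin.pos_of_ne_zero hv⟩
        exact hsrc 0 (Or.inl ⟨hcell, htop v hcell⟩)
    · rintro rfl u hu
      obtain ⟨hcell, hentry⟩ := (arc_iff_of_head_mem_rows F.zero_mem).mp hu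
      exact absurd (htop u hcell) (by simp [hentry])

theorem arc_of_arc_of_arc_of_arc (hT : F.IsEW T) {i' : Fin (n + 1)} (hi : i ∈ F.rows)
    (hi' : i' ∈ F.rows) (hle : i ≤ i') (hij : F.Arc T i j) (hji' : F.Arc T j i')
    (hi'v : F.Arc T i' v) : F.Arc T i v := by
  rw [arc_iff_of_tail_mem_rows hi] at hij ⊢
  rw [arc_iff_of_head_mem_rows hi'] at hji'
  rw [arc_iff_of_tail_mem_rows hi'] at hi'v
  have hiv : F.Cell i v := ⟨hi, hi'v.1.2.1, hle.trans_lt hi'v.1.2.2⟩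
  have hrect := hT.2.2.2 i' i j v hji'.1 hi'v.1 hij.1 hiv
  exact ⟨hiv, by simpa [hji'.2, hi'v.2, hij.2] using hrect⟩

theorem exists_mem_forall_mem_not_arc (hT : F.IsEW T) (X : Finset (Fin (n + 1)))
    (hX : X.Nonempty) : ∃ v ∈ X, ∀ u ∈ X, ¬F.Arc T u v := by
  induction X using Finset.strongInduction with
  | H X ih =>
  by_cases hrows : (X.filter (· ∈ F.rows)).Nonempty
  · obtain ⟨m, hm, hmax⟩ := Finset.exists_max_image _ id hrows
    simp only [Finset.mem_filter, id] at hm hmax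
    by_contra! hpred
    obtain ⟨j, hjX, hjm⟩ := hpred m hm.1
    obtain ⟨i, hiX, hij⟩ := hpred j hjX
    have hj : j ∉ F.rows := fun h => (isOrientation_arc.adj hjm).mem_rows_iff.mp h hm.2
    have hi : i ∈ F.rows := (isOrientation_arc.adj hij).mem_rows_iff.mpr hj
    have him : i ≠ m := fun h => isOrientation_arc.asymm j m hjm (h ▸ hij)
    -- The last row `m` of `X` can be dropped: row `i` has an arc to every column `m` has one to.
    have hiX' : i ∈ X.erase m := Finset.mem_erase.mpr ⟨him, hiX⟩
    obtain ⟨v, hvX, hv⟩ := ih (X.erase m) (Finset.erase_ssubset hm.1) ⟨i, hiX'⟩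
    obtain ⟨u, huX, huv⟩ := hpred v (Finset.mem_of_mem_erase hvX)
    by_cases hum : u = m
    · subst hum
      exact hv i hiX' (hT.arc_of_arc_of_arc_of_arc hi hm.2 (hmax i ⟨hiX, hi⟩) hij hjm huv)
    · exact hv u (Finset.mem_erase.mpr ⟨hum, huX⟩) huv
  · have hcols : ∀ v ∈ X, v ∉ F.rows := fun v hvX hv =>
      hrows ⟨v, Finset.mem_filter.mpr ⟨hvX, hv⟩⟩
    obtain ⟨v, hvX⟩ := hX
    refine ⟨v, hvX, fun u huX huv => hcols u huX ?_⟩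
    exact (isOrientation_arc.adj huv).mem_rows_iff.mpr (hcols v hvX)

theorem wellFounded_arc (hT : F.IsEW T) : WellFounded (F.Arc T) :=
  WellFounded.wellFounded_iff_has_min.mpr fun X hX => by
    simpa using hT.exists_mem_forall_mem_not_arc X.toFinset (by simpa using hX)

end IsEW

theorem suppS_eq_true_iff :
    F.suppS T i j = true ↔ F.bIdx (F.phiTC T) i < F.bIdx (F.phiTC T) j := by
  simp [suppS]

theorem suppS_eq_false_iff :
    F.suppS T i j = false ↔ F.bIdx (F.phiTC T) j ≤ F.bIdx (F.phiTC T) i := by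
  simp [suppS]

theorem IsEW.suppS_eq (hT : F.IsEW T) (h : F.Cell i j) : F.suppS T i j = T i j := by
  have hlt {u v} (huv : F.Arc T u v) : F.bIdx (F.phiTC T) u < F.bIdx (F.phiTC T) v := by
    rw [phiTC_eq_outConfig_arc]
    exact hT.isRooted_arc.bIdx_lt_bIdx hT.wellFounded_arc huv
  cases hij : T i j
  · exact suppS_eq_false_iff.mpr (hlt (Or.inr ⟨h, hij⟩)).le
  · exact suppS_eq_true_iff.mpr (hlt (Or.inl ⟨h, hij⟩))

theorem cornersupport_iff_of_eq_true (h : T i j = true) :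
    F.Cornersupport T i j ↔ ∃ r s, r ∈ F.rows ∧ s ∉ F.rows ∧
      F.bIdx (F.phiTC T) s ≤ F.bIdx (F.phiTC T) r ∧
      F.bIdx (F.phiTC T) r < F.bIdx (F.phiTC T) j ∧
      F.bIdx (F.phiTC T) i < F.bIdx (F.phiTC T) s := by
  simp only [Cornersupport, h, Bool.not_true, suppS_eq_false_iff, suppS_eq_true_iff]
  refine exists₂_congr fun r s => ⟨fun ⟨hr, hs, _, _, hcorner⟩ => ⟨hr, hs, hcorner⟩, ?_⟩
  rintro ⟨hr, hs, hsr, hrj, his⟩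
  refine ⟨hr, hs, ?_, ?_, hsr, hrj, his⟩ <;> rintro rfl <;> omega

theorem IsEW.bIdx_add_one_eq_iff (hT : F.IsEW T) (h : F.Cell i j) :
    F.bIdx (F.phiTC T) i + 1 = F.bIdx (F.phiTC T) j ↔
      F.suppS T i j = true ∧ ¬F.Cornersupport T i j := by
  have hcorner (hS : F.suppS T i j = true) :=
    cornersupport_iff_of_eq_true (F := F) ((hT.suppS_eq h).symm.trans hS)
  rw [and_congr_right fun hS => not_congr (hcorner hS), suppS_eq_true_iff, phiTC_eq_outConfig_arc]
  exact hT.isRooted_arc.bIdx_add_one_eq_iff hT.wellFounded_arc h.1 h.2.1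

end Tableau

end Ferrers

/-- **Lemma, part (b).** If the column vertex `j` lies in `Vˡ`
(`= canonTop (2l - 1)`) and `k` is a row vertex with `k < j`, then `k ∈ U^{l-1}`
(`= canonTop (2l - 2)`) if and only if `S_{kj} = 1` and this `1` is not a
cornersupport entry. -/
theorem mem_U_iff_noncornersupport_one {n : ℕ} (F : Ferrers n)
    (T : Fin (n + 1) → Fin (n + 1) → Bool) (hT : F.IsEW T)
    (j k : Fin (n + 1)) (hj : j ∉ F.rows) (hk : k ∈ F.rows) (hkj : k < j)
    (l : ℕ) (hjV : j ∈ F.canonTop (F.phiTC T) (2 * l - 1)) :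
    k ∈ F.canonTop (F.phiTC T) (2 * l - 2) ↔
      F.suppS T k j = true ∧ ¬F.Cornersupport T k j := by
  rw [← hT.bIdx_add_one_eq_iff ⟨hk, hj, hkj⟩]
  rw [Ferrers.phiTC_eq_outConfig_arc] at hjV ⊢
  have hodd := (hT.isRooted_arc.mem_rows_iff_even_bIdx hT.wellFounded_arc).not.mp hj
  rw [hT.isRooted_arc.mem_canonTop_iff hT.wellFounded_arc] at hjV ⊢
  rw [Nat.even_iff] at hodd
  omega
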